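/- Let L > 0, N ∈ ℕ with N ≥ 2, a := 1/N, m₁, m₂ > 0. Let h : ℝ → ℝ be C⁶ with h′ < 0 and h(x+L) = h(x) − 1, and let φ be its inverse function, assumed to satisfy φ′(α) ≤ −m₁ < 0 and |φ^{(k)}(α)| ≤ m₂ for 1 ≤ k ≤ 6. Then there is a constant C = C(m₁, m₂, L) such that for every grid index i₀ ∈ {1, …, N−1}, with α* := i₀/N: −(2πa/L²)·Σ_{j=0, j≠i₀}^{N−1} cot(π(φ(j/N)−φ(α*))/L) = −(2π/L)·(H h′)(φ(α*)) + v₁(α*)·a + R, where v₁(α) := −φ″(α)/(L·φ′(α)²) and |R| ≤ C·a⁴. (The left-hand side is the closed form of the misfit interaction term I₁ = −(2/L)·Σ_{j≠i₀} a/(φ_j − φ(α*)), summed symmetrically over all periodic images.) -/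

import Mathlib

open Real Filter Topology MeasureTheory

/-- The first-order coefficient `v₁(α) = −φ″(α)/(L·φ′(α)²)`. -/
noncomputable def v1coef (L : ℝ) (φ : ℝ → ℝ) (α : ℝ) : ℝ :=
  -(iteratedDeriv 2 φ α) / (L * (deriv φ α) ^ 2)

/-!
Fix `α` and view the interaction `cot(π(φ(α + β) - φ(α))/L)` as a `1`-periodic function of the
height difference `β`. Its only pole is that of `(L/φ'(α)) cot(πβ)`; subtracting this multiple of
the cotangent leaves a `Cⁿ` periodic function `G`, where `φ` is `Cⁿ⁺²`. On the grid `β = j/N` the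
subtracted cotangents cancel by oddness, so the sum is the trapezoidal sum of `G` without its node
`β = 0`. The trapezoidal rule approximates `∫₀¹ G` to order `N⁻ⁿ`, since `G` is periodic, and the
missing node contributes `-G(0)/N`, which is the `v₁` term. The substitution `b = h(x - s) - h(x)`
turns the principal value defining `(Hh')(x)` into the one of `G + (L/φ'(α)) cot(π ·)`, in which the
cotangent again cancels, so that `(Hh')(φ(α)) = L⁻¹ ∫₀¹ G`.

The constant depends only on the bounds for `φ` because `G` is a fixed analytic function of `β`,
`φ'(α)` and the second-order Taylor quotient of `φ`, evaluated in a compact set determined by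
those bounds.
-/

/-! ### The trapezoidal rule for periodic functions -/

/-- The mean of `f` over the `N` equally spaced points `x, x + 1/N, …, x + (N - 1)/N`: the
trapezoidal rule on a period of a `1`-periodic function, with nodes shifted by `x`. -/
noncomputable def gridMean (N : ℕ) (f : ℝ → ℝ) (x : ℝ) : ℝ :=
  (N : ℝ)⁻¹ * ∑ j ∈ Finset.range N, f (x + j / N)

lemma deriv_periodic {f : ℝ → ℝ} {c : ℝ} (hf : Function.Periodic f c) :
    Function.Periodic (deriv f) c := fun x => by
  rw [← deriv_comp_add_const, funext hf]

lemma iteratedDeriv_periodic {f : ℝ → ℝ} {c : ℝ} (hf : Function.Periodic f c) (n : ℕ) :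
    Function.Periodic (iteratedDeriv n f) c := by
  induction n with
  | zero => simpa only [iteratedDeriv_zero] using hf
  | succ n ih => simpa only [iteratedDeriv_succ] using deriv_periodic ih

section GridMean

variable {N : ℕ} {f : ℝ → ℝ}

lemma gridMean_periodic (hN : N ≠ 0) (hf : Function.Periodic f 1) :
    Function.Periodic (gridMean N f) (N : ℝ)⁻¹ := by
  intro x
  have hN' : (N : ℝ) ≠ 0 := Nat.cast_ne_zero.2 hN
  have hshift : ∀ j : ℕ, f (x + (N : ℝ)⁻¹ + j / N) = f (x + (j + 1 : ℕ) / N) := fun j => by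
    congr 1; push_cast; ring
  have hlast : f (x + (N : ℕ) / N) = f (x + (0 : ℕ) / N) := by
    rw [div_self hN', hf]; simp
  simp only [gridMean, hshift]
  congr 1
  linarith [Finset.sum_range_succ (fun j : ℕ => f (x + j / N)) N,
    Finset.sum_range_succ' (fun j : ℕ => f (x + j / N)) N]

lemma gridMean_odd (hN : N ≠ 0) (hf : Function.Periodic f 1) (hodd : f.Odd) :
    (gridMean N f).Odd := by
  intro x
  have hN' : (N : ℝ) ≠ 0 := Nat.cast_ne_zero.2 hN
  rw [← gridMean_periodic hN hf x, gridMean, gridMean, ← mul_neg, ← Finset.sum_neg_distrib,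
    ← Finset.sum_range_reflect]
  congr 1
  refine Finset.sum_congr rfl fun j hj => ?_
  have hj' : j + 1 ≤ N := Finset.mem_range.1 hj
  rw [← hodd, ← hf (-(x + (N : ℝ)⁻¹ + j / N)), Nat.sub_sub, add_comm 1 j, Nat.cast_sub hj']
  congr 1
  push_cast
  field_simp
  ring

lemma hasDerivAt_gridMean (hf : Differentiable ℝ f) (x : ℝ) :
    HasDerivAt (gridMean N f) (gridMean N (deriv f) x) x :=
  (HasDerivAt.fun_sum fun _ _ => (hf _).hasDerivAt.comp_add_const _ _).const_mul _

lemma integral_gridMean (hN : N ≠ 0) (hf : Continuous f) (hper : Function.Periodic f 1) (x : ℝ) :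
    ∫ y in x..x + (N : ℝ)⁻¹, gridMean N f y = (N : ℝ)⁻¹ * ∫ t in (0 : ℝ)..1, f t := by
  have hN' : (N : ℝ) ≠ 0 := Nat.cast_ne_zero.2 hN
  let node : ℕ → ℝ := fun j => x + j / N
  have hpiece : ∀ j ∈ Finset.range N, ∫ y in x..x + (N : ℝ)⁻¹, f (y + j / N) =
      ∫ y in node j..node (j + 1), f y := by
    intro j _
    rw [intervalIntegral.integral_comp_add_right]
    congr 1
    simp only [node]
    push_cast
    ring
  simp only [gridMean]
  rw [intervalIntegral.integral_const_mul,
    intervalIntegral.integral_finsetSum fun (j : ℕ) _ =>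
      (by fun_prop : Continuous fun y => f (y + j / N)).intervalIntegrable _ _,
    Finset.sum_congr rfl hpiece,
    intervalIntegral.sum_integral_adjacent_intervals fun _ _ => hf.intervalIntegrable _ _]
  simpa [node, div_self hN'] using Or.inl (hper.intervalIntegral_add_eq x 0)

lemma abs_le_mul_of_integral_eq_zero {g g' : ℝ → ℝ} {B x l : ℝ} (hl : 0 < l)
    (hg : ∀ y, HasDerivAt g (g' y) y) (hB : ∀ y, |g' y| ≤ B)
    (hint : ∫ y in x..x + l, g y = 0) : |g x| ≤ B * l := by
  have hgc : Continuous g := continuous_iff_continuousAt.2 fun y => (hg y).continuousAt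
  have hprim : ∀ y, HasDerivAt (fun z => ∫ t in x..z, g t) (g y) y := fun y =>
    (hgc.integral_hasStrictDerivAt x y).hasDerivAt
  obtain ⟨c, hc, hgc0⟩ := exists_hasDerivAt_eq_zero (lt_add_of_pos_right x hl)
    (fun y _ => (hprim y).continuousAt.continuousWithinAt) (by simp [hint]) (fun y _ => hprim y)
  have hlip : |g x - g c| ≤ B * |x - c| :=
    convex_univ.norm_image_sub_le_of_norm_hasDerivWithin_le
      (fun y _ => (hg y).hasDerivWithinAt) (fun y _ => hB y) (Set.mem_univ c) (Set.mem_univ x)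
  have hB0 : 0 ≤ B := (abs_nonneg _).trans (hB x)
  rw [hgc0, sub_zero] at hlip
  refine hlip.trans (mul_le_mul_of_nonneg_left ?_ hB0)
  rw [abs_sub_comm, abs_of_nonneg] <;> linarith [hc.1, hc.2]

lemma abs_gridMean_le (hN : N ≠ 0) {M : ℝ} (hM : ∀ x, |f x| ≤ M) (x : ℝ) :
    |gridMean N f x| ≤ M := by
  have hN' : (0 : ℝ) < N := Nat.cast_pos.2 hN.bot_lt
  have hsum : |∑ j ∈ Finset.range N, f (x + j / N)| ≤ N * M := by
    simpa using (Finset.abs_sum_le_sum_abs _ _).trans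
      (Finset.sum_le_sum fun (j : ℕ) (_ : j ∈ Finset.range N) => hM (x + j / N))
  rwa [gridMean, abs_mul, abs_of_pos (inv_pos.2 hN'), inv_mul_le_iff₀ hN']

-- The error has mean zero over each grid cell and its derivative is the error for `f'`, so each
-- derivative of `f` gains one factor `1/N`.
theorem abs_gridMean_sub_integral_le (hN : N ≠ 0) {n : ℕ} (hf : ContDiff ℝ n f)
    (hper : Function.Periodic f 1) {M : ℝ} (hM : ∀ x, |iteratedDeriv n f x| ≤ M) (x : ℝ) :
    |gridMean N f x - ∫ t in (0 : ℝ)..1, f t| ≤ 2 * M * (N : ℝ)⁻¹ ^ n := by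
  have hN' : (0 : ℝ) < (N : ℝ)⁻¹ := inv_pos.2 (Nat.cast_pos.2 hN.bot_lt)
  induction n generalizing f x with
  | zero =>
    simp only [iteratedDeriv_zero] at hM
    have hint : |∫ t in (0 : ℝ)..1, f t| ≤ M := by
      simpa using intervalIntegral.norm_integral_le_of_norm_le_const (a := (0 : ℝ)) (b := 1)
        (f := f) fun t _ => hM t
    have htri := abs_sub (gridMean N f x) (∫ t in (0 : ℝ)..1, f t)
    rw [pow_zero]
    linarith [abs_gridMean_le hN hM x]
  | succ n ih =>
    rw [Nat.cast_succ] at hf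
    obtain ⟨hd, -, hf'⟩ := contDiff_succ_iff_deriv.1 hf
    have hderiv : ∫ t in (0 : ℝ)..1, deriv f t = 0 := by
      rw [intervalIntegral.integral_deriv_eq_sub (fun y _ => hd y)
        (hf'.continuous.intervalIntegrable _ _), sub_eq_zero]
      simpa using hper 0
    have ih' : ∀ y, |gridMean N (deriv f) y| ≤ 2 * M * (N : ℝ)⁻¹ ^ n := fun y => by
      simpa only [hderiv, sub_zero] using
        ih hf' (deriv_periodic hper) (fun z => by simpa only [iteratedDeriv_succ'] using hM z) y
    have hmean : ∫ y in x..x + (N : ℝ)⁻¹, (gridMean N f y - ∫ t in (0 : ℝ)..1, f t) = 0 := by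
      have hcont : Continuous (gridMean N f) :=
        continuous_iff_continuousAt.2 fun y => (hasDerivAt_gridMean hd y).continuousAt
      rw [intervalIntegral.integral_sub (hcont.intervalIntegrable _ _)
        intervalIntegrable_const, integral_gridMean hN hd.continuous hper]
      simp
    have := abs_le_mul_of_integral_eq_zero hN'
      (fun y => (hasDerivAt_gridMean hd y).sub_const _) ih' hmean
    rwa [pow_succ, ← mul_assoc]

end GridMean

/-! ### The cotangent and its pole -/

lemma cot_periodic : Function.Periodic cot π := fun x => by
  rw [← tan_inv_eq_cot, ← tan_inv_eq_cot, tan_periodic]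

lemma cot_odd : Function.Odd cot := fun x => by
  rw [← tan_inv_eq_cot, ← tan_inv_eq_cot, tan_neg, inv_neg]

lemma cot_pi_mul_periodic : Function.Periodic (fun x => cot (π * x)) 1 := fun x => by
  simp only [mul_add, mul_one, cot_periodic (π * x)]

lemma cot_pi_mul_odd : Function.Odd fun x => cot (π * x) := fun x => by
  simp only [mul_neg, cot_odd (π * x)]

lemma continuousAt_cot {x : ℝ} (hx : sin x ≠ 0) : ContinuousAt cot x := by
  rw [show cot = fun y => cos y / sin y from funext cot_eq_cos_div_sin]
  exact continuous_cos.continuousAt.div continuous_sin.continuousAt hx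

lemma sin_ne_zero_of_abs_lt_pi {x : ℝ} (hx : x ≠ 0) (hxπ : |x| < π) : sin x ≠ 0 :=
  (sin_eq_zero_iff_of_lt_of_lt (abs_lt.1 hxπ).1 (abs_lt.1 hxπ).2).not.2 hx

lemma sinc_ne_zero_of_abs_lt_pi {x : ℝ} (hxπ : |x| < π) : sinc x ≠ 0 := by
  rcases eq_or_ne x 0 with rfl | hx
  · simp
  · rw [sinc_of_ne_zero hx]
    exact div_ne_zero (sin_ne_zero_of_abs_lt_pi hx hxπ) hx

lemma analyticAt_dslope {𝕜 E : Type*} [NontriviallyNormedField 𝕜] [NormedAddCommGroup E]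
    [NormedSpace 𝕜 E] {f : 𝕜 → E} {a x : 𝕜} (ha : AnalyticAt 𝕜 f a) (hx : AnalyticAt 𝕜 f x) :
    AnalyticAt 𝕜 (dslope f a) x := by
  rcases eq_or_ne x a with rfl | hxa
  · obtain ⟨p, hp⟩ := hx
    exact ⟨_, hp.has_fpower_series_dslope_fslope⟩
  · have hslope : AnalyticAt 𝕜 (fun y => (y - a)⁻¹ • (f y - f a)) x :=
      ((analyticAt_id.sub analyticAt_const).inv (sub_ne_zero.2 hxa)).smul
        (hx.sub analyticAt_const)
    exact hslope.congr (dslope_eventuallyEq_slope_of_ne f hxa).symm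

lemma analyticAt_sinc (x : ℝ) : AnalyticAt ℝ sinc x :=
  sinc_eq_dslope ▸ analyticAt_dslope analyticAt_sin analyticAt_sin

lemma deriv_zero_of_even {f : ℝ → ℝ} (hf : f.Even) : deriv f 0 = 0 := by
  have h := deriv_comp_neg f 0
  rw [funext hf, neg_zero] at h
  linarith

/-- The regular part `cot x - 1 / x` of the cotangent at its pole `0`. Both terms have the junk
value `0` at `x = 0`, and `0` is also the value that removes the singularity. -/
noncomputable def cotSubInv (x : ℝ) : ℝ := cot x - x⁻¹

lemma cotSubInv_zero : cotSubInv 0 = 0 := by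
  simp [cotSubInv, cot_eq_cos_div_sin]

lemma cotSubInv_eq_dslope_div_sinc {x : ℝ} (hxπ : |x| < π) :
    cotSubInv x = dslope (fun y => cos y - sinc y) 0 x / sinc x := by
  rcases eq_or_ne x 0 with rfl | hx
  · have heven : Function.Even fun y => cos y - sinc y := fun y => by simp
    rw [dslope_same, deriv_zero_of_even heven, cotSubInv_zero, zero_div]
  · have hsin := sin_ne_zero_of_abs_lt_pi hx hxπ
    rw [cotSubInv, dslope_of_ne _ hx, slope_def_field, cot_eq_cos_div_sin, sinc_of_ne_zero hx,
      cos_zero, sinc_zero]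
    field_simp
    ring

lemma analyticAt_cotSubInv {x : ℝ} (hxπ : |x| < π) : AnalyticAt ℝ cotSubInv x := by
  have hnum (y : ℝ) : AnalyticAt ℝ (fun z => cos z - sinc z) y :=
    analyticAt_cos.sub (analyticAt_sinc y)
  refine ((analyticAt_dslope (hnum 0) (hnum x)).div (analyticAt_sinc x)
    (sinc_ne_zero_of_abs_lt_pi hxπ)).congr ?_
  filter_upwards [(isOpen_lt continuous_abs continuous_const).mem_nhds hxπ] with y hy
  exact (cotSubInv_eq_dslope_div_sinc hy).symm

lemma sin_pi_mul_pos {t : ℝ} (h0 : 0 < t) (h1 : t < 1) : 0 < sin (π * t) :=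
  sin_pos_of_pos_of_lt_pi (by positivity) (mul_lt_of_lt_one_right pi_pos h1)

lemma integral_cot_pi_mul {a b : ℝ} (ha : a ∈ Set.Ioo 0 1) (hb : b ∈ Set.Ioo 0 1) :
    ∫ t in a..b, cot (π * t) = (log (sin (π * b)) - log (sin (π * a))) / π := by
  have hsin : ∀ t ∈ Set.uIcc a b, sin (π * t) ≠ 0 := fun t ht =>
    have htI := Set.ordConnected_Ioo.uIcc_subset ha hb ht
    (sin_pi_mul_pos htI.1 htI.2).ne'
  rw [intervalIntegral.integral_eq_sub_of_hasDerivAt (f := fun t => log (sin (π * t)) / π),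
    sub_div]
  · intro t ht
    refine ((((hasDerivAt_id t).const_mul π).sin.log (hsin t ht)).div_const π).congr_deriv ?_
    rw [cot_eq_cos_div_sin]
    simp only [id_eq]
    field_simp
  · exact ContinuousOn.intervalIntegrable fun t ht =>
      ((continuousAt_cot (hsin t ht)).comp (f := fun t => π * t)
        (by fun_prop)).continuousWithinAt

theorem tendsto_integral_cot_pi_mul {ι : Type*} {l : Filter ι} {a b : ι → ℝ}
    (ha : Tendsto a l (𝓝[>] 0)) (hb : Tendsto b l (𝓝[>] 0))
    (hab : Tendsto (fun i => b i / a i) l (𝓝 1)) :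
    Tendsto (fun i => ∫ t in a i..1 - b i, cot (π * t)) l (𝓝 0) := by
  have hsinc {c : ι → ℝ} (hc : Tendsto c l (𝓝[>] 0)) :
      Tendsto (fun i => sinc (π * c i)) l (𝓝 1) := by
    simpa [Function.comp_def] using (continuous_sinc.tendsto _).comp
      ((tendsto_nhds_of_tendsto_nhdsWithin hc).const_mul π)
  have hratio : Tendsto (fun i => log (sinc (π * b i) / sinc (π * a i) * (b i / a i)) / π)
      l (𝓝 0) := by
    simpa using ((((hsinc hb).div (hsinc ha) one_ne_zero).mul hab).log (by simp)).div_const π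
  have hunit : Set.Ioo (0 : ℝ) 1 ∈ 𝓝[>] 0 := Ioo_mem_nhdsGT one_pos
  refine hratio.congr' ?_
  filter_upwards [ha hunit, hb hunit] with i hai hbi
  have hsa := sin_pi_mul_pos hai.1 hai.2
  have hsb := sin_pi_mul_pos hbi.1 hbi.2
  have ha0 := hai.1.ne'
  have hb0 := hbi.1.ne'
  rw [integral_cot_pi_mul hai ⟨by linarith [hbi.2], by linarith [hbi.1]⟩, mul_sub, mul_one,
    sin_pi_sub, ← log_div hsb.ne' hsa.ne', sinc_of_ne_zero (mul_ne_zero pi_ne_zero ha0),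
    sinc_of_ne_zero (mul_ne_zero pi_ne_zero hb0)]
  congr 2
  field_simp

/-! ### Taylor quotients and uniform bounds -/

/-- The weighted average `∫₀¹ w(t) ψ(α + tβ) dt` of `ψ` over the segment from `α` to `α + β`, as a
function of the increment `β`. Taylor remainders in integral form are of this shape. -/
noncomputable def segmentAverage (w ψ : ℝ → ℝ) (α β : ℝ) : ℝ :=
  ∫ t in (0 : ℝ)..1, w t * ψ (α + t * β)

section SegmentAverage

variable {w ψ : ℝ → ℝ} {n : ℕ}

lemma hasDerivAt_segmentAverage (hw : Continuous w) (hψ : ContDiff ℝ 1 ψ) (α β : ℝ) :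
    HasDerivAt (segmentAverage w ψ α) (segmentAverage (fun t => w t * t) (deriv ψ) α β) β := by
  have hψc : Continuous ψ := hψ.continuous
  have := hψ.continuous_deriv le_rfl
  obtain ⟨B, hB⟩ := (isCompact_Icc.prod (isCompact_closedBall β 1)).exists_bound_of_continuousOn
    (f := fun p : ℝ × ℝ => w p.1 * p.1 * deriv ψ (α + p.1 * p.2)) (s := Set.Icc 0 1 ×ˢ _)
    (by fun_prop)
  refine (intervalIntegral.hasDerivAt_integral_of_dominated_loc_of_deriv_le (𝕜 := ℝ)
    (F := fun β t => w t * ψ (α + t * β)) (F' := fun β t => w t * t * deriv ψ (α + t * β))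
    (bound := fun _ => B) (Metric.ball_mem_nhds β one_pos)
    (.of_forall fun _ => Continuous.aestronglyMeasurable (by fun_prop))
    (Continuous.intervalIntegrable (by fun_prop) _ _)
    (Continuous.aestronglyMeasurable (by fun_prop)) ?_ intervalIntegrable_const ?_).2
  · refine .of_forall fun t ht x hx => ?_
    rw [Set.uIoc_of_le zero_le_one] at ht
    exact hB (t, x) ⟨⟨ht.1.le, ht.2⟩, Metric.ball_subset_closedBall hx⟩
  · refine .of_forall fun t _ x _ => ?_
    have hline : HasDerivAt (fun x => α + t * x) t x := by
      simpa using ((hasDerivAt_id x).const_mul t).const_add α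
    exact (((hψ.differentiable one_ne_zero _).hasDerivAt.comp x hline).const_mul
      (w t)).congr_deriv (by ring)

lemma contDiff_segmentAverage (hw : Continuous w) (hψ : ContDiff ℝ n ψ) (α : ℝ) :
    ContDiff ℝ n (segmentAverage w ψ α) := by
  induction n generalizing w ψ with
  | zero =>
    have hψc : Continuous ψ := hψ.continuous
    exact contDiff_zero.2 (intervalIntegral.continuous_parametric_intervalIntegral_of_continuous'
      (by fun_prop) _ _)
  | succ n ih =>
    rw [Nat.cast_succ] at hψ ⊢
    have hderiv := hasDerivAt_segmentAverage hw (hψ.of_le le_add_self) α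
    refine contDiff_succ_iff_deriv.2 ⟨fun β => (hderiv β).differentiableAt, by simp, ?_⟩
    rw [funext fun β => (hderiv β).deriv]
    exact ih (hw.mul continuous_id) (contDiff_succ_iff_deriv.1 hψ).2.2

lemma iteratedDeriv_segmentAverage (hw : Continuous w) (hψ : ContDiff ℝ n ψ) (α : ℝ) :
    iteratedDeriv n (segmentAverage w ψ α) =
      segmentAverage (fun t => w t * t ^ n) (iteratedDeriv n ψ) α := by
  induction n generalizing w ψ with
  | zero => simp
  | succ n ih =>
    rw [Nat.cast_succ] at hψ
    have hderiv := hasDerivAt_segmentAverage hw (hψ.of_le le_add_self) α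
    rw [iteratedDeriv_succ', funext fun β => (hderiv β).deriv,
      ih (w := fun t => w t * t) (by fun_prop) (contDiff_succ_iff_deriv.1 hψ).2.2,
      iteratedDeriv_succ']
    simp only [pow_succ', mul_assoc]

lemma abs_segmentAverage_le {M : ℝ} (hw : ∀ t ∈ Set.Icc (0 : ℝ) 1, |w t| ≤ 1)
    (hM : ∀ x, |ψ x| ≤ M) (α β : ℝ) : |segmentAverage w ψ α β| ≤ M := by
  have hbound : ∀ t ∈ Set.uIoc (0 : ℝ) 1, ‖w t * ψ (α + t * β)‖ ≤ M := by
    intro t ht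
    rw [Set.uIoc_of_le zero_le_one] at ht
    calc ‖w t * ψ (α + t * β)‖ = |w t| * |ψ (α + t * β)| := abs_mul _ _
      _ ≤ 1 * M := mul_le_mul (hw t ⟨ht.1.le, ht.2⟩) (hM _) (abs_nonneg _) zero_le_one
      _ = M := one_mul M
  simpa [segmentAverage] using intervalIntegral.norm_integral_le_of_norm_le_const hbound

end SegmentAverage

/-- The second-order Taylor quotient `r` of `φ` at `α`, characterised for `β ≠ 0` by
`φ(α + β) = φ(α) + φ'(α)β + r(β)β²`. -/
noncomputable def taylorQuotient (φ : ℝ → ℝ) (α : ℝ) : ℝ → ℝ :=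
  segmentAverage (fun t => 1 - t) (iteratedDeriv 2 φ) α

section TaylorQuotient

variable {φ : ℝ → ℝ} {n : ℕ}

lemma contDiff_iteratedDeriv {k : ℕ} (hφ : ContDiff ℝ (n + k) φ) :
    ContDiff ℝ n (iteratedDeriv k φ) := by
  rw [iteratedDeriv_eq_iterate]
  exact ContDiff.iterate_deriv' n k hφ

lemma taylorQuotient_zero (φ : ℝ → ℝ) (α : ℝ) :
    taylorQuotient φ α 0 = iteratedDeriv 2 φ α / 2 := by
  simp only [taylorQuotient, segmentAverage, mul_zero, add_zero,
    intervalIntegral.integral_mul_const]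
  rw [intervalIntegral.integral_sub (by simp) (by simp)]
  norm_num [integral_id]
  ring

lemma sub_eq_mul_taylorQuotient (hφ : ContDiff ℝ 2 φ) (α β : ℝ) :
    φ (α + β) - φ α = β * (deriv φ α + β * taylorQuotient φ α β) := by
  have htaylor : φ (α + β) = φ α + β * deriv φ α +
      ∫ t in (0 : ℝ)..1, (1 - t) * (β ^ 2 * iteratedDeriv 2 φ (α + t * β)) := by
    simpa [Finset.sum_range_succ, iteratedFDeriv_apply_eq_iteratedDeriv_mul_prod] using
      map_add_eq_sum_add_integral_iteratedFDeriv (n := 1) (x := α) (y := β)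
        fun t _ => hφ.contDiffAt
  simp only [mul_left_comm _ (β ^ 2), intervalIntegral.integral_const_mul] at htaylor
  rw [htaylor, taylorQuotient, segmentAverage]
  ring

lemma contDiff_taylorQuotient (hφ : ContDiff ℝ (n + 2) φ) (α : ℝ) :
    ContDiff ℝ n (taylorQuotient φ α) :=
  contDiff_segmentAverage (by fun_prop) (contDiff_iteratedDeriv hφ) α

lemma abs_iteratedDeriv_taylorQuotient_le {M : ℝ} (hφ : ContDiff ℝ (n + 2) φ)
    (hM : ∀ x, |iteratedDeriv (n + 2) φ x| ≤ M) (α β : ℝ) :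
    |iteratedDeriv n (taylorQuotient φ α) β| ≤ M := by
  rw [taylorQuotient, iteratedDeriv_segmentAverage (by fun_prop) (contDiff_iteratedDeriv hφ)]
  refine abs_segmentAverage_le (fun t ht => ?_) (fun x => ?_) α β
  · rw [abs_of_nonneg (mul_nonneg (sub_nonneg.2 ht.2) (pow_nonneg ht.1 n))]
    exact mul_le_one₀ (by linarith [ht.1]) (pow_nonneg ht.1 n) (pow_le_one₀ ht.1 ht.2)
  · simpa only [iteratedDeriv_eq_iterate, Function.iterate_add_apply] using hM x

end TaylorQuotient

lemma exists_abs_iteratedDeriv_comp_le {E : Type*} [NormedAddCommGroup E] [NormedSpace ℝ E]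
    {g : E → ℝ} {K : Set E} (hK : IsCompact K) {n : ℕ} (hg : ∀ y ∈ K, ContDiffAt ℝ n g y) (D : ℝ) :
    ∃ C, ∀ f : ℝ → E, ContDiff ℝ n f → ∀ x, f x ∈ K →
      (∀ i, 1 ≤ i → i ≤ n → ‖iteratedFDeriv ℝ i f x‖ ≤ D ^ i) →
      |iteratedDeriv n (g ∘ f) x| ≤ C := by
  have hbound : ∀ i ∈ Finset.range (n + 1), ∃ c, ∀ y ∈ K, ‖iteratedFDeriv ℝ i g y‖ ≤ c :=
    fun i hi => hK.exists_bound_of_continuousOn fun y hy =>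
      ((hg y hy).continuousAt_iteratedFDeriv
        (by exact_mod_cast Finset.mem_range_succ_iff.1 hi)).continuousWithinAt
  choose! c hc using hbound
  obtain ⟨C, hC⟩ := ((Finset.range (n + 1)).image c).exists_le
  refine ⟨n.factorial * C * D ^ n, fun f hf x hx hD => ?_⟩
  let t : Set E := {y | ContDiffAt ℝ n g y}
  have ht : IsOpen t := isOpen_iff_mem_nhds.2 fun y hy => ContDiffAt.eventually hy (by simp)
  have hs : IsOpen (f ⁻¹' t) := ht.preimage hf.continuous
  have hcomp := norm_iteratedFDerivWithin_comp_le (𝕜 := ℝ) (g := g) (N := n) (n := n) (C := C)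
    (D := D)
    (fun y (hy : y ∈ t) => ContDiffAt.contDiffWithinAt hy) hf.contDiffOn le_rfl ht.uniqueDiffOn
    hs.uniqueDiffOn (Set.mapsTo_preimage f t) (hg _ hx)
    (fun i hi => by
      rw [iteratedFDerivWithin_of_isOpen i ht (hg _ hx)]
      exact (hc i (Finset.mem_range_succ_iff.2 hi) _ hx).trans
        (hC _ (Finset.mem_image_of_mem c (Finset.mem_range_succ_iff.2 hi))))
    (fun i h1 hi => by
      rw [iteratedFDerivWithin_of_isOpen i hs (hg _ hx)]
      exact hD i h1 hi)
  rwa [iteratedFDerivWithin_of_isOpen n hs (hg _ hx),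
    norm_iteratedFDeriv_eq_norm_iteratedDeriv] at hcomp

lemma contDiff_of_periodic {f : ℝ → ℝ} {n : ℕ} (hf : Function.Periodic f 1)
    (hloc : ∀ x, |x| ≤ 1 / 2 → ContDiffAt ℝ n f x) : ContDiff ℝ n f := by
  refine contDiff_iff_contDiffAt.2 fun x => ?_
  have hshift : f = fun y => f (y - round x) := funext fun y => by
    simpa using (hf.sub_int_mul_eq (round x) (x := y)).symm
  rw [hshift]
  exact (hloc _ (abs_sub_round x)).comp x (f := fun y => y - (round x : ℝ)) (by fun_prop)

/-! ### The regularized interaction kernel -/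

/-- The interaction `cot(π(φ(α + β) - φ(α))/L)` of the step at height `α` with the step at height
`α + β`, summed over all periodic images. At its pole `β = 0` it takes the junk value
`cot 0 = 0`. -/
noncomputable def interactionKernel (L : ℝ) (φ : ℝ → ℝ) (α β : ℝ) : ℝ :=
  cot (π * (φ (α + β) - φ α) / L)

/-- The interaction kernel with its pole `(L/φ'(α)) cot(πβ)` removed. The value at integers `β` is
the continuous extension. -/
noncomputable def regularizedKernel (L : ℝ) (φ : ℝ → ℝ) (α β : ℝ) : ℝ :=
  if sin (π * β) = 0 then -(L * iteratedDeriv 2 φ α) / (2 * π * deriv φ α ^ 2)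
  else interactionKernel L φ α β - L / deriv φ α * cot (π * β)

/-- The regularized kernel as a function of `(β, r, p)`, where `p = φ'(α)` and `r` is the
second-order Taylor quotient: writing `φ(α + β) - φ(α) = β(p + βr)`, the poles of the two cotangents
combine into the last term. -/
noncomputable def taylorKernel (L : ℝ) (y : ℝ × ℝ × ℝ) : ℝ :=
  cotSubInv (π * (y.1 * (y.2.2 + y.1 * y.2.1)) / L) - L / y.2.2 * cotSubInv (π * y.1) -
    L / π * (y.2.1 / ((y.2.2 + y.1 * y.2.1) * y.2.2))

/-- A compact set of triples `(β, r, p)`, determined by the bounds on the profile alone, on which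
`taylorKernel L` is smooth and which contains all triples that arise with `|β| ≤ 1/2`. -/
def taylorDomain (L m₁ m₂ : ℝ) : Set (ℝ × ℝ × ℝ) :=
  Set.Icc (-(1 / 2)) (1 / 2) ×ˢ Set.Icc (-m₂) m₂ ×ˢ Set.Icc (-m₂) (-m₁) ∩
    {y | y.2.2 + y.1 * y.2.1 ≤ -m₁ ∧ |y.1 * (y.2.2 + y.1 * y.2.1)| ≤ L - m₁ / 2}

/-- The curve `β ↦ (β, r(β), φ'(α))` along which `taylorKernel L` is the regularized kernel. -/
noncomputable def taylorCurve (φ : ℝ → ℝ) (α β : ℝ) : ℝ × ℝ × ℝ :=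
  (β, taylorQuotient φ α β, deriv φ α)

lemma isCompact_taylorDomain (L m₁ m₂ : ℝ) : IsCompact (taylorDomain L m₁ m₂) :=
  (isCompact_Icc.prod (isCompact_Icc.prod isCompact_Icc)).inter_right
    ((isClosed_le (by fun_prop) continuous_const).and
      (isClosed_le (by fun_prop) continuous_const))

lemma contDiffAt_taylorKernel {L m₁ m₂ : ℝ} {n : ℕ} {y : ℝ × ℝ × ℝ} (hm₁ : 0 < m₁)
    (hy : y ∈ taylorDomain L m₁ m₂) : ContDiffAt ℝ n (taylorKernel L) y := by
  obtain ⟨⟨hβ, -, hp⟩, hq, hu⟩ := hy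
  have hL : 0 < L := by linarith [(abs_nonneg _).trans hu]
  have hp0 : y.2.2 ≠ 0 := by linarith [hp.2]
  have hq0 : y.2.2 + y.1 * y.2.1 ≠ 0 := by linarith
  have hβπ : |π * y.1| < π := by
    rw [abs_mul, abs_of_pos pi_pos]
    exact mul_lt_of_lt_one_right pi_pos (by linarith [abs_le.2 hβ])
  have huπ : |π * (y.1 * (y.2.2 + y.1 * y.2.1)) / L| < π := by
    rw [abs_div, abs_mul, abs_of_pos pi_pos, abs_of_pos hL, div_lt_iff₀ hL]
    exact mul_lt_mul_of_pos_left (by linarith) pi_pos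
  have hcotu := (analyticAt_cotSubInv huπ).contDiffAt (n := n).comp y
    (f := fun y : ℝ × ℝ × ℝ => π * (y.1 * (y.2.2 + y.1 * y.2.1)) / L) (by fun_prop)
  have hcotβ := (analyticAt_cotSubInv hβπ).contDiffAt (n := n).comp y
    (f := fun y : ℝ × ℝ × ℝ => π * y.1) (by fun_prop)
  exact (hcotu.sub (.mul (.div (by fun_prop) (by fun_prop) hp0) hcotβ)).sub
    (contDiffAt_const.mul (.div (by fun_prop) (by fun_prop) (mul_ne_zero hq0 hp0)))

lemma cot_sub_mul_cot_eq_taylorKernel {L b r p : ℝ} (hb : b ≠ 0) (hp : p ≠ 0)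
    (hq : p + b * r ≠ 0) :
    cot (π * (b * (p + b * r)) / L) - L / p * cot (π * b) = taylorKernel L (b, r, p) := by
  simp only [taylorKernel, cotSubInv]
  field_simp
  ring

/-- `φ` is the inverse of a `C^(n+2)` step profile: it drops by the period `L` per unit height, with
slope at most `-m₁`, and its derivatives of orders `1, …, n + 2` are bounded by `m₂`. -/
structure IsInverseProfile (n : ℕ) (L m₁ m₂ : ℝ) (φ : ℝ → ℝ) : Prop where
  contDiff : ContDiff ℝ (n + 2) φ
  map_add_one : ∀ α, φ (α + 1) = φ α - L
  deriv_le : ∀ α, deriv φ α ≤ -m₁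
  abs_iteratedDeriv_le : ∀ k, 1 ≤ k → k ≤ n + 2 → ∀ α, |iteratedDeriv k φ α| ≤ m₂

namespace IsInverseProfile

variable {n : ℕ} {L m₁ m₂ : ℝ} {φ : ℝ → ℝ}

lemma contDiff_two (hφ : IsInverseProfile n L m₁ m₂ φ) : ContDiff ℝ 2 φ :=
  hφ.contDiff.of_le le_add_self

lemma deriv_ne_zero (hφ : IsInverseProfile n L m₁ m₂ φ) (hm₁ : 0 < m₁) (α : ℝ) :
    deriv φ α ≠ 0 := by
  linarith [hφ.deriv_le α]

lemma sub_le (hφ : IsInverseProfile n L m₁ m₂ φ) {x y : ℝ} (hxy : x ≤ y) :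
    φ y - φ x ≤ -m₁ * (y - x) :=
  image_sub_le_mul_sub_of_deriv_le (hφ.contDiff_two.differentiable two_ne_zero) hφ.deriv_le hxy

lemma period_pos (hφ : IsInverseProfile n L m₁ m₂ φ) (hm₁ : 0 < m₁) : 0 < L := by
  linarith [hφ.sub_le (zero_le_one' ℝ), zero_add (1 : ℝ) ▸ hφ.map_add_one 0]

lemma abs_sub_le (hφ : IsInverseProfile n L m₁ m₂ φ) (hm₁ : 0 < m₁) (α : ℝ) {β : ℝ}
    (hβ : |β| ≤ 1) : |φ (α + β) - φ α| ≤ L - m₁ * (1 - |β|) := by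
  have hprev : φ (α - 1) = φ α + L := by
    linarith [sub_add_cancel α 1 ▸ hφ.map_add_one (α - 1)]
  rcases le_total 0 β with h | h
  · rw [abs_of_nonneg h] at hβ ⊢
    have hleft := hφ.sub_le (show α ≤ α + β by linarith)
    have hright := hφ.sub_le (show α + β ≤ α + 1 by linarith)
    rw [hφ.map_add_one] at hright
    rw [abs_le]
    constructor <;> nlinarith [hφ.period_pos hm₁]
  · rw [abs_of_nonpos h] at hβ ⊢
    have hright := hφ.sub_le (show α + β ≤ α by linarith)
    have hleft := hφ.sub_le (show α - 1 ≤ α + β by linarith)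
    rw [hprev] at hleft
    rw [abs_le]
    constructor <;> nlinarith [hφ.period_pos hm₁]

lemma deriv_add_mul_taylorQuotient_le (hφ : IsInverseProfile n L m₁ m₂ φ) (α β : ℝ) :
    deriv φ α + β * taylorQuotient φ α β ≤ -m₁ := by
  have htaylor := sub_eq_mul_taylorQuotient hφ.contDiff_two α β
  rcases lt_trichotomy β 0 with h | rfl | h
  · have hmono := hφ.sub_le (show α + β ≤ α by linarith)
    exact le_of_mul_le_mul_left (by linarith) (neg_pos.2 h)
  · simpa using hφ.deriv_le α
  · have hmono := hφ.sub_le (show α ≤ α + β by linarith)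
    exact le_of_mul_le_mul_left (by linarith) h

lemma taylorCurve_mem_taylorDomain (hφ : IsInverseProfile n L m₁ m₂ φ) (hm₁ : 0 < m₁) (α : ℝ)
    {β : ℝ} (hβ : |β| ≤ 1 / 2) : taylorCurve φ α β ∈ taylorDomain L m₁ m₂ := by
  have hp : |deriv φ α| ≤ m₂ := by
    simpa only [iteratedDeriv_one] using hφ.abs_iteratedDeriv_le 1 le_rfl (by lia) α
  have hr : |taylorQuotient φ α β| ≤ m₂ := by
    simpa only [iteratedDeriv_zero] using abs_iteratedDeriv_taylorQuotient_le (n := 0)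
      (by simpa using hφ.contDiff_two) (hφ.abs_iteratedDeriv_le 2 one_le_two le_add_self) α β
  refine ⟨⟨abs_le.1 hβ, abs_le.1 hr, (abs_le.1 hp).1, hφ.deriv_le α⟩,
    hφ.deriv_add_mul_taylorQuotient_le α β, ?_⟩
  calc |β * (deriv φ α + β * taylorQuotient φ α β)| = |φ (α + β) - φ α| := by
        rw [sub_eq_mul_taylorQuotient hφ.contDiff_two]
    _ ≤ L - m₁ * (1 - |β|) := hφ.abs_sub_le hm₁ α (by linarith)
    _ ≤ L - m₁ / 2 := by nlinarith

lemma contDiff_taylorCurve (hφ : IsInverseProfile n L m₁ m₂ φ) (α : ℝ) :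
    ContDiff ℝ n (taylorCurve φ α) :=
  contDiff_id.prodMk ((contDiff_taylorQuotient hφ.contDiff α).prodMk contDiff_const)

lemma norm_iteratedFDeriv_taylorCurve_le (hφ : IsInverseProfile n L m₁ m₂ φ) (α x : ℝ) {i : ℕ}
    (hi : 1 ≤ i) (hin : i ≤ n) : ‖iteratedFDeriv ℝ i (taylorCurve φ α) x‖ ≤ (1 + m₂) ^ i := by
  have hm₂ : 0 ≤ m₂ := (abs_nonneg _).trans (hφ.abs_iteratedDeriv_le 1 le_rfl (by lia) 0)
  have hφi : ContDiff ℝ (i + 2) φ := 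
    hφ.contDiff.of_le (by exact_mod_cast Nat.add_le_add_right hin 2)
  have hr : ContDiffAt ℝ i (taylorQuotient φ α) x := (contDiff_taylorQuotient hφi α).contDiffAt
  have hri : |iteratedDeriv i (taylorQuotient φ α) x| ≤ m₂ :=
    abs_iteratedDeriv_taylorQuotient_le hφi
      (hφ.abs_iteratedDeriv_le (i + 2) (by lia) (by lia)) α x
  have hid : ‖iteratedDeriv i (fun x : ℝ => x) x‖ ≤ 1 := by
    rw [iteratedDeriv_fun_id]
    split_ifs <;> simp_all
  have hpow : 1 + m₂ ≤ (1 + m₂) ^ i := le_self_pow₀ (by linarith) (by lia)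
  unfold taylorCurve
  rw [iteratedFDeriv_prodMk (f := fun x : ℝ => x) contDiffAt_id (hr.prodMk contDiffAt_const) le_rfl,
    iteratedFDeriv_prodMk hr contDiffAt_const le_rfl, ContinuousMultilinearMap.opNorm_prod,
    ContinuousMultilinearMap.opNorm_prod]
  simp only [norm_iteratedFDeriv_eq_norm_iteratedDeriv, norm_eq_abs] at hid ⊢
  refine max_le (by linarith) (max_le (by linarith) ?_)
  rw [iteratedDeriv_const, if_neg (by lia), abs_zero]
  linarith

lemma interactionKernel_periodic (hφ : IsInverseProfile n L m₁ m₂ φ) (hm₁ : 0 < m₁) (α : ℝ) :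
    Function.Periodic (interactionKernel L φ α) 1 := fun β => by
  have hL := (hφ.period_pos hm₁).ne'
  rw [interactionKernel, ← add_assoc, hφ.map_add_one, ← cot_periodic]
  congr 1
  field_simp
  ring

lemma regularizedKernel_periodic (hφ : IsInverseProfile n L m₁ m₂ φ) (hm₁ : 0 < m₁) (α : ℝ) :
    Function.Periodic (regularizedKernel L φ α) 1 := fun β => by
  simp only [regularizedKernel, hφ.interactionKernel_periodic hm₁ α β, mul_add, mul_one,
    sin_add_pi, neg_eq_zero, cot_periodic (π * β)]

lemma regularizedKernel_eq_taylorKernel (hφ : IsInverseProfile n L m₁ m₂ φ) (hm₁ : 0 < m₁)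
    (α : ℝ) {β : ℝ} (hβ : |β| < 1) :
    regularizedKernel L φ α β = taylorKernel L (taylorCurve φ α β) := by
  rcases eq_or_ne β 0 with rfl | hβ0
  · simp [regularizedKernel, taylorKernel, taylorCurve, taylorQuotient_zero, cotSubInv_zero]
    ring
  · have hsin : sin (π * β) ≠ 0 := by
      refine sin_ne_zero_of_abs_lt_pi (mul_ne_zero pi_ne_zero hβ0) ?_
      rw [abs_mul, abs_of_pos pi_pos]
      exact mul_lt_of_lt_one_right pi_pos hβ
    have hq : deriv φ α + β * taylorQuotient φ α β ≠ 0 := by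
      linarith [hφ.deriv_add_mul_taylorQuotient_le α β]
    rw [regularizedKernel, if_neg hsin, interactionKernel,
      sub_eq_mul_taylorQuotient hφ.contDiff_two, taylorCurve,
      cot_sub_mul_cot_eq_taylorKernel hβ0 (hφ.deriv_ne_zero hm₁ α) hq]

lemma regularizedKernel_eventuallyEq (hφ : IsInverseProfile n L m₁ m₂ φ) (hm₁ : 0 < m₁) (α : ℝ)
    {β : ℝ} (hβ : |β| < 1) :
    regularizedKernel L φ α =ᶠ[𝓝 β] taylorKernel L ∘ taylorCurve φ α := by
  filter_upwards [(isOpen_lt continuous_abs continuous_const).mem_nhds hβ] with x hx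
  exact hφ.regularizedKernel_eq_taylorKernel hm₁ α hx

lemma contDiff_regularizedKernel (hφ : IsInverseProfile n L m₁ m₂ φ) (hm₁ : 0 < m₁) (α : ℝ) :
    ContDiff ℝ n (regularizedKernel L φ α) := by
  refine contDiff_of_periodic (hφ.regularizedKernel_periodic hm₁ α) fun β hβ => ?_
  have hsmooth : ContDiffAt ℝ n (taylorKernel L) (taylorCurve φ α β) :=
    contDiffAt_taylorKernel hm₁ (hφ.taylorCurve_mem_taylorDomain hm₁ α hβ)
  exact (hsmooth.comp β (hφ.contDiff_taylorCurve α).contDiffAt).congr_of_eventuallyEq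
    (hφ.regularizedKernel_eventuallyEq hm₁ α (by linarith))

end IsInverseProfile

theorem exists_abs_iteratedDeriv_regularizedKernel_le (n : ℕ) (L m₂ : ℝ) {m₁ : ℝ}
    (hm₁ : 0 < m₁) :
    ∃ M, ∀ φ, IsInverseProfile n L m₁ m₂ φ → ∀ α x,
      |iteratedDeriv n (regularizedKernel L φ α) x| ≤ M := by
  obtain ⟨M, hM⟩ := exists_abs_iteratedDeriv_comp_le (isCompact_taylorDomain L m₁ m₂)
    (fun y hy => contDiffAt_taylorKernel (n := n) hm₁ hy) (1 + m₂)
  refine ⟨M, fun φ hφ α x => ?_⟩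
  have hround := abs_sub_round x
  have hshift := (iteratedDeriv_periodic (hφ.regularizedKernel_periodic hm₁ α) n).sub_int_mul_eq
    (round x) (x := x)
  rw [mul_one] at hshift
  rw [← hshift, (hφ.regularizedKernel_eventuallyEq hm₁ α (by linarith)).iteratedDeriv_eq n]
  exact hM _ (hφ.contDiff_taylorCurve α) _ (hφ.taylorCurve_mem_taylorDomain hm₁ α hround)
    fun i hi hin => hφ.norm_iteratedFDeriv_taylorCurve_le α _ hi hin

/-! ### The principal value -/

lemma tendsto_sub_div_sub {f : ℝ → ℝ} {f' x : ℝ} (hf : HasDerivAt f f' x) (hf' : f' ≠ 0) :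
    Tendsto (fun δ => (f x - f (x + δ)) / (f (x - δ) - f x)) (𝓝[>] 0) (𝓝 1) := by
  have hslope := hasDerivAt_iff_tendsto_slope_zero.1 hf
  have hright : Tendsto (fun δ => δ⁻¹ • (f (x + δ) - f x)) (𝓝[>] 0) (𝓝 f') :=
    hslope.mono_left (nhdsWithin_mono _ fun δ hδ => ne_of_gt hδ)
  have hleft : Tendsto (fun δ => (-δ)⁻¹ • (f (x + -δ) - f x)) (𝓝[>] 0) (𝓝 f') := by
    refine hslope.comp (tendsto_nhdsWithin_iff.2 ⟨?_, ?_⟩)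
    · simpa using (continuous_neg.tendsto (0 : ℝ)).mono_left nhdsWithin_le_nhds
    · filter_upwards [self_mem_nhdsWithin] with δ hδ using neg_ne_zero.2 (ne_of_gt hδ)
  rw [← div_self hf']
  refine (hright.div hleft hf').congr' ?_
  filter_upwards [self_mem_nhdsWithin] with δ (hδ : 0 < δ)
  rw [Pi.div_apply, smul_eq_mul, smul_eq_mul, ← sub_eq_add_neg, inv_neg, neg_mul, div_neg,
    mul_div_mul_left _ _ (inv_ne_zero hδ.ne'), ← neg_div, neg_sub]

section PrincipalValue

variable {L c x : ℝ} {h φ G : ℝ → ℝ}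

lemma continuousOn_add_mul_cot (hG : Continuous G) :
    ContinuousOn (fun b => G b + c * cot (π * b)) (Set.Ioo 0 1) := fun b hb =>
  (hG.continuousAt.add (continuousAt_const.mul
    ((continuousAt_cot (sin_pi_mul_pos hb.1 hb.2).ne').comp (f := fun b => π * b)
      (by fun_prop)))).continuousWithinAt

lemma tendsto_integral_add_mul_cot (hG : Continuous G) {ι : Type*} {l : Filter ι} {a b : ι → ℝ}
    (ha : Tendsto a l (𝓝[>] 0)) (hb : Tendsto b l (𝓝[>] 0))
    (hab : Tendsto (fun i => b i / a i) l (𝓝 1)) :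
    Tendsto (fun i => ∫ t in a i..1 - b i, (G t + c * cot (π * t))) l
      (𝓝 (∫ t in (0 : ℝ)..1, G t)) := by
  have hint : ∀ u v, IntervalIntegrable G volume u v := fun _ _ => hG.intervalIntegrable _ _
  have hprim : Continuous fun u => ∫ t in (0 : ℝ)..u, G t :=
    intervalIntegral.continuous_primitive hint 0
  have hregular : Tendsto (fun i => ∫ t in a i..1 - b i, G t) l (𝓝 (∫ t in (0 : ℝ)..1, G t)) := by
    have hupper := (hprim.tendsto _).comp
      ((tendsto_nhds_of_tendsto_nhdsWithin hb).const_sub (1 : ℝ))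
    have hlower := (hprim.tendsto _).comp (tendsto_nhds_of_tendsto_nhdsWithin ha)
    simpa [Function.comp_def, intervalIntegral.integral_interval_sub_left (hint _ _) (hint _ _)]
      using hupper.sub hlower
  have hlimit := hregular.add ((tendsto_integral_cot_pi_mul ha hb hab).const_mul c)
  rw [mul_zero, add_zero] at hlimit
  have hunit : Set.Ioo (0 : ℝ) 1 ∈ 𝓝[>] 0 := Ioo_mem_nhdsGT one_pos
  refine hlimit.congr' ?_
  filter_upwards [ha hunit, hb hunit] with i hai hbi
  have hcot : IntervalIntegrable (fun t => c * cot (π * t)) volume (a i) (1 - b i) := by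
    simpa using ((continuousOn_add_mul_cot (c := c) continuous_zero).mono
      (Set.ordConnected_Ioo.uIcc_subset hai
        ⟨by linarith [hbi.2], by linarith [hbi.1]⟩)).intervalIntegrable
  rw [intervalIntegral.integral_add (hint _ _) hcot, intervalIntegral.integral_const_mul]

lemma sub_mem_Ioo_of_strictAnti (hanti : StrictAnti h) (hper : ∀ x, h (x + L) = h x - 1) {s : ℝ}
    (hs : s ∈ Set.Ioo 0 L) : h (x - s) - h x ∈ Set.Ioo 0 1 := by
  have hprev : h (x - L) = h x + 1 := by
    linarith [sub_add_cancel x L ▸ hper (x - L)]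
  constructor
  · linarith [hanti (sub_lt_self x hs.1)]
  · linarith [hanti (sub_lt_sub_left hs.2 x)]

lemma integral_deriv_mul_cot_eq (hh : ContDiff ℝ 1 h) (hanti : StrictAnti h)
    (hper : ∀ x, h (x + L) = h x - 1) (hinv : Function.LeftInverse φ h) (hG : Continuous G)
    (hK : ∀ b ∈ Set.Ioo 0 1, interactionKernel L φ (h x) b = G b + c * cot (π * b))
    {δ : ℝ} (hδ : δ ∈ Set.Ioo 0 L) :
    ∫ s in δ..L - δ, deriv h (x - s) * cot (π * s / L) =
      ∫ b in h (x - δ) - h x..1 - (h x - h (x + δ)), (G b + c * cot (π * b)) := by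
  have hsub : Set.uIcc δ (L - δ) ⊆ Set.Ioo 0 L :=
    Set.ordConnected_Ioo.uIcc_subset hδ ⟨by linarith [hδ.2], by linarith [hδ.1]⟩
  have hmem : ∀ s ∈ Set.uIcc δ (L - δ), h (x - s) - h x ∈ Set.Ioo 0 1 := fun s hs =>
    sub_mem_Ioo_of_strictAnti hanti hper (hsub hs)
  have hderiv (s : ℝ) : HasDerivAt (fun s => h (x - s) - h x) (-deriv h (x - s)) s :=
    ((hh.differentiable one_ne_zero _).hasDerivAt.comp_const_sub x s).sub_const _
  have := hh.continuous_deriv le_rfl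
  have hend : 1 - (h x - h (x + δ)) = h (x - (L - δ)) - h x := by
    have := hper (x - (L - δ))
    rw [show x - (L - δ) + L = x + δ by ring] at this
    linarith
  have hintegrand : ∀ s ∈ Set.uIcc δ (L - δ), deriv h (x - s) * cot (π * s / L) =
      (G (h (x - s) - h x) + c * cot (π * (h (x - s) - h x))) * -deriv h (x - s) := fun s hs => by
    rw [← hK _ (hmem s hs), interactionKernel, add_sub_cancel, hinv, hinv,
      show π * (x - s - x) / L = -(π * s / L) by ring, cot_odd]
    ring
  rw [intervalIntegral.integral_congr hintegrand, hend]
  exact intervalIntegral.integral_comp_mul_deriv' (fun s _ => hderiv s) (by fun_prop)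
    ((continuousOn_add_mul_cot hG).mono (Set.image_subset_iff.2 hmem))

theorem tendsto_integral_deriv_mul_cot (hL : 0 < L) (hh : ContDiff ℝ 1 h)
    (hneg : ∀ x, deriv h x < 0) (hper : ∀ x, h (x + L) = h x - 1)
    (hinv : Function.LeftInverse φ h) (hG : Continuous G)
    (hK : ∀ b ∈ Set.Ioo 0 1, interactionKernel L φ (h x) b = G b + c * cot (π * b)) :
    Tendsto (fun δ => ∫ s in δ..L - δ, deriv h (x - s) * cot (π * s / L)) (𝓝[>] 0)
      (𝓝 (∫ t in (0 : ℝ)..1, G t)) := by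
  have hanti : StrictAnti h := strictAnti_of_deriv_neg hneg
  have hhc : Continuous h := hh.continuous
  have ha : Tendsto (fun δ => h (x - δ) - h x) (𝓝[>] 0) (𝓝[>] 0) := by
    refine tendsto_nhdsWithin_iff.2 ⟨?_, ?_⟩
    · exact ((by fun_prop : Continuous fun δ => h (x - δ) - h x).tendsto' 0 0
        (by simp)).mono_left nhdsWithin_le_nhds
    · filter_upwards [self_mem_nhdsWithin] with δ hδ using sub_pos.2 (hanti (sub_lt_self x hδ))
  have hb : Tendsto (fun δ => h x - h (x + δ)) (𝓝[>] 0) (𝓝[>] 0) := by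
    refine tendsto_nhdsWithin_iff.2 ⟨?_, ?_⟩
    · exact ((by fun_prop : Continuous fun δ => h x - h (x + δ)).tendsto' 0 0
        (by simp)).mono_left nhdsWithin_le_nhds
    · filter_upwards [self_mem_nhdsWithin] with δ hδ
        using sub_pos.2 (hanti (lt_add_of_pos_right x hδ))
  refine (tendsto_integral_add_mul_cot (c := c) hG ha hb
    (tendsto_sub_div_sub (hh.differentiable one_ne_zero x).hasDerivAt (hneg x).ne)).congr' ?_
  filter_upwards [Ioo_mem_nhdsGT hL] with δ hδ
  exact (integral_deriv_mul_cot_eq hh hanti hper hinv hG hK hδ).symm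

end PrincipalValue

/-! ### The expansion -/

section Expansion

variable {n N i₀ : ℕ} {L m₁ m₂ : ℝ} {h φ : ℝ → ℝ}

lemma isInverseProfile_of_rightInverse (hm₁ : 0 < m₁) (hh : ContDiff ℝ (n + 2) h)
    (hneg : ∀ x, deriv h x < 0) (hper : ∀ x, h (x + L) = h x - 1)
    (hinv : Function.RightInverse φ h) (hd : ∀ α, deriv φ α ≤ -m₁)
    (hb : ∀ k, 1 ≤ k → k ≤ n + 2 → ∀ α, |iteratedDeriv k φ α| ≤ m₂) :
    IsInverseProfile n L m₁ m₂ φ where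
  contDiff := by
    have hφd : Differentiable ℝ φ := fun α =>
      differentiableAt_of_deriv_ne_zero (by linarith [hd α])
    have hhd : Differentiable ℝ h := hh.differentiable (by simp)
    let e : ℝ ≃ₜ ℝ :=
      { toFun := h
        invFun := φ
        left_inv := hinv.leftInverse_of_injective (strictAnti_of_deriv_neg hneg).injective
        right_inv := hinv
        continuous_toFun := hhd.continuous
        continuous_invFun := hφd.continuous }
    exact e.contDiff_symm_deriv (fun x => (hneg x).ne) (fun x => (hhd x).hasDerivAt) hh
  map_add_one α := by
    refine (strictAnti_of_deriv_neg hneg).injective ?_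
    have hshift := hper (φ α - L)
    rw [sub_add_cancel, hinv] at hshift
    rw [hinv]
    linarith
  deriv_le := hd
  abs_iteratedDeriv_le := hb

lemma interactionKernel_eq_add {β : ℝ} (α : ℝ) (hβ : sin (π * β) ≠ 0) :
    interactionKernel L φ α β =
      regularizedKernel L φ α β + L / deriv φ α * cot (π * β) := by
  rw [regularizedKernel, if_neg hβ, sub_add_cancel]

lemma v1coef_eq_mul_regularizedKernel_zero {α : ℝ} (hL : L ≠ 0) :
    v1coef L φ α = 2 * π / L ^ 2 * regularizedKernel L φ α 0 := by
  simp only [regularizedKernel, v1coef, mul_zero, sin_zero, if_true]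
  field_simp

lemma inv_mul_sum_erase_cot (hφ : IsInverseProfile n L m₁ m₂ φ) (hm₁ : 0 < m₁) (hi₀ : i₀ < N) :
    (N : ℝ)⁻¹ * ∑ j ∈ (Finset.range N).erase i₀, cot (π * (φ (j / N) - φ (i₀ / N)) / L) =
      gridMean N (interactionKernel L φ (i₀ / N)) 0 := by
  have hshift := (gridMean_periodic (Nat.ne_zero_of_lt hi₀)
    (hφ.interactionKernel_periodic hm₁ (i₀ / N))).sub_nat_mul_eq i₀ (x := 0)
  rw [← hshift, gridMean, Finset.sum_erase _ (by simp [cot_eq_cos_div_sin])]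
  congr 1
  refine Finset.sum_congr rfl fun j _ => ?_
  rw [interactionKernel]
  congr 5
  ring

-- The node `0` carries the junk value `cot 0 = 0` in place of the regularized value.
lemma gridMean_interactionKernel_zero (hN : N ≠ 0) (α : ℝ) :
    gridMean N (interactionKernel L φ α) 0 =
      gridMean N (regularizedKernel L φ α) 0 - (N : ℝ)⁻¹ * regularizedKernel L φ α 0 := by
  have hcot : gridMean N (fun x => cot (π * x)) 0 = 0 :=
    (gridMean_odd hN cot_pi_mul_periodic cot_pi_mul_odd).map_zero
  have hnode : ∀ j ∈ Finset.range N, interactionKernel L φ α (0 + j / N) =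
      regularizedKernel L φ α (0 + j / N) + L / deriv φ α * cot (π * (0 + j / N)) -
        if j = 0 then regularizedKernel L φ α 0 else 0 := by
    intro j hj
    rcases eq_or_ne j 0 with rfl | hj0
    · simp [interactionKernel, cot_eq_cos_div_sin]
    · have hN' : (0 : ℝ) < N := Nat.cast_pos.2 hN.bot_lt
      have hjN : (j : ℝ) < N := Nat.cast_lt.2 (Finset.mem_range.1 hj)
      have hsin := (sin_pi_mul_pos (div_pos (Nat.cast_pos.2 hj0.bot_lt) hN')
        ((div_lt_one hN').2 hjN)).ne'
      rw [if_neg hj0, sub_zero, zero_add, interactionKernel_eq_add α hsin]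
  rw [gridMean] at hcot
  simp only [gridMean]
  rw [Finset.sum_congr rfl hnode, Finset.sum_sub_distrib, Finset.sum_add_distrib, ← Finset.mul_sum,
    Finset.sum_ite_eq', if_pos (Finset.mem_range.2 (Nat.pos_of_ne_zero hN))]
  linear_combination L / deriv φ α * hcot

lemma hilbertTransform_deriv_eq_integral {α H : ℝ} (hφ : IsInverseProfile n L m₁ m₂ φ)
    (hm₁ : 0 < m₁) (hh : ContDiff ℝ 1 h) (hneg : ∀ x, deriv h x < 0)
    (hper : ∀ x, h (x + L) = h x - 1) (hinv : Function.RightInverse φ h)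
    (hH : Tendsto (fun δ => 1 / L * ∫ s in δ..L - δ, deriv h (φ α - s) * cot (π * s / L))
      (𝓝[>] 0) (𝓝 H)) :
    H = 1 / L * ∫ t in (0 : ℝ)..1, regularizedKernel L φ α t := by
  have hpv := tendsto_integral_deriv_mul_cot (x := φ α) (hφ.period_pos hm₁) hh hneg hper
    (hinv.leftInverse_of_injective (strictAnti_of_deriv_neg hneg).injective)
    (hφ.contDiff_regularizedKernel hm₁ α).continuous fun b hb => by
      rw [hinv, interactionKernel_eq_add α (sin_pi_mul_pos hb.1 hb.2).ne']
  exact tendsto_nhds_unique hH (hpv.const_mul (1 / L))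

end Expansion

theorem stmt_13_general (n : ℕ) (L m₁ m₂ : ℝ) (hm₁ : 0 < m₁) :
    ∃ C : ℝ, 0 < C ∧
      ∀ N : ℕ, ∀ h φ Hh' : ℝ → ℝ,
        ContDiff ℝ (n + 2) h →
        (∀ x : ℝ, deriv h x < 0) →
        (∀ x : ℝ, h (x + L) = h x - 1) →
        (∀ α : ℝ, h (φ α) = α) →
        (∀ α : ℝ, deriv φ α ≤ -m₁) →
        (∀ k : ℕ, 1 ≤ k → k ≤ n + 2 → ∀ α : ℝ, |iteratedDeriv k φ α| ≤ m₂) →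
        (∀ x : ℝ, Tendsto (fun δ : ℝ =>
            (1 / L) * ∫ s in δ..(L - δ), deriv h (x - s) * Real.cot (π * s / L))
          (𝓝[>] (0 : ℝ)) (𝓝 (Hh' x))) →
        ∀ i₀ : ℕ, i₀ < N →
          ∃ R : ℝ,
            -(2 * π * (N : ℝ)⁻¹ / L ^ 2) *
                (∑ j ∈ (Finset.range N).erase i₀,
                  Real.cot (π * (φ ((j : ℝ) / (N : ℝ)) - φ ((i₀ : ℝ) / (N : ℝ))) / L))
              = -(2 * π / L) * Hh' (φ ((i₀ : ℝ) / (N : ℝ)))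
                + v1coef L φ ((i₀ : ℝ) / (N : ℝ)) * (N : ℝ)⁻¹ + R ∧
            |R| ≤ C * (N : ℝ)⁻¹ ^ n := by
  obtain ⟨M, hM⟩ := exists_abs_iteratedDeriv_regularizedKernel_le n L m₂ hm₁
  refine ⟨2 * π / L ^ 2 * (2 * |M|) + 1, by positivity, ?_⟩
  intro N h φ Hh' hh hneg hper hinv hd hb hH i₀ hi₀
  have hφ := isInverseProfile_of_rightInverse hm₁ hh hneg hper hinv hd hb
  have hN : N ≠ 0 := Nat.ne_zero_of_lt hi₀
  have hL : L ≠ 0 := (hφ.period_pos hm₁).ne'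
  set α : ℝ := i₀ / N
  have hsum := (inv_mul_sum_erase_cot hφ hm₁ hi₀).trans (gridMean_interactionKernel_zero hN α)
  have hHilbert : Hh' (φ α) = 1 / L * ∫ t in (0 : ℝ)..1, regularizedKernel L φ α t :=
    hilbertTransform_deriv_eq_integral hφ hm₁ (hh.of_le (by norm_cast; lia)) hneg hper hinv
      (hH (φ α))
  have herror := abs_gridMean_sub_integral_le hN (hφ.contDiff_regularizedKernel hm₁ α)
    (hφ.regularizedKernel_periodic hm₁ α) (hM φ hφ α) 0
  refine ⟨-(2 * π / L ^ 2) * (gridMean N (regularizedKernel L φ α) 0 -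
    ∫ t in (0 : ℝ)..1, regularizedKernel L φ α t), ?_, ?_⟩
  · rw [hHilbert, v1coef_eq_mul_regularizedKernel_zero hL]
    linear_combination -(2 * π / L ^ 2) * hsum
  · rw [abs_mul, abs_neg, abs_of_nonneg (by positivity : 0 ≤ 2 * π / L ^ 2)]
    calc _ ≤ 2 * π / L ^ 2 * (2 * |M| * (N : ℝ)⁻¹ ^ n) := by
          gcongr
          exact herror.trans (by gcongr; exact le_abs_self M)
      _ ≤ (2 * π / L ^ 2 * (2 * |M|) + 1) * (N : ℝ)⁻¹ ^ n := by
          linarith [show (0 : ℝ) ≤ (N : ℝ)⁻¹ ^ n by positivity]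

/-- Expansion of the misfit interaction term: for `h` a `C⁶` height profile
with `h′ < 0`, `h(x+L) = h(x) − 1`, inverse `φ` satisfying `φ′ ≤ −m₁ < 0`, `|φ^{(k)}| ≤ m₂`
(`1 ≤ k ≤ 6`), and `Hh'` the `L`-periodic Hilbert transform of `h′` (principal-value
characterization `hH`), we have at every interior grid point `α* = i₀/N`:
`−(2πa/L²)·Σ_{j=0,j≠i₀}^{N−1} cot(π(φ(j/N)−φ(α*))/L)
  = −(2π/L)(Hh′)(φ(α*)) + v₁(α*)·a + R`, `|R| ≤ C·a⁴`, `C = C(m₁,m₂,L)`. -/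
theorem stmt_13 (L m₁ m₂ : ℝ) (hL : 0 < L) (hm₁ : 0 < m₁) (hm₂ : 0 < m₂) :
    ∃ C : ℝ, 0 < C ∧
      ∀ N : ℕ, 2 ≤ N →
        ∀ h φ Hh' : ℝ → ℝ,
          ContDiff ℝ 6 h →
          (∀ x : ℝ, deriv h x < 0) →
          (∀ x : ℝ, h (x + L) = h x - 1) →
          (∀ α : ℝ, h (φ α) = α) →
          (∀ α : ℝ, deriv φ α ≤ -m₁) →
          (∀ k : ℕ, 1 ≤ k → k ≤ 6 → ∀ α : ℝ, |iteratedDeriv k φ α| ≤ m₂) →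
          (∀ x : ℝ, Tendsto (fun δ : ℝ =>
              (1 / L) * ∫ s in δ..(L - δ), deriv h (x - s) * Real.cot (π * s / L))
            (𝓝[>] (0:ℝ)) (𝓝 (Hh' x))) →
          ∀ i₀ : ℕ, 1 ≤ i₀ → i₀ ≤ N - 1 →
            ∃ R : ℝ,
              -(2 * π * (N:ℝ)⁻¹ / L ^ 2) *
                  (∑ j ∈ (Finset.range N).erase i₀,
                    Real.cot (π * (φ ((j:ℝ)/(N:ℝ)) - φ ((i₀:ℝ)/(N:ℝ))) / L))
                = -(2 * π / L) * Hh' (φ ((i₀:ℝ)/(N:ℝ)))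
                  + v1coef L φ ((i₀:ℝ)/(N:ℝ)) * (N:ℝ)⁻¹ + R ∧
              |R| ≤ C * (N:ℝ)⁻¹ ^ 4 := by
  obtain ⟨C, hC, hbound⟩ := stmt_13_general 4 L m₁ m₂ hm₁
  exact ⟨C, hC, fun N hN h φ Hh' hh hneg hper hinv hd hb hH i₀ _ hi₀ =>
    hbound N h φ Hh' (by exact_mod_cast hh) hneg hper hinv hd hb hH i₀ (by lia)⟩
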